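/- Fix integers m ≥ 1 and u ≥ 0 and a real number c, and set λ = e^{−c}. For n ≥ max(m, u+1) let k_n = ⌊(n/m)·(log n + c)⌋. Then (n)_u·((n−u)_m/(n)_m)^{k_n} → λ^u as n → ∞, where (x)_j := x(x−1)⋯(x−j+1) denotes the falling factorial with (x)_0 = 1. -/

import Mathlib

open Finset Filter

/-!
Write `L n = ∑ i < m, log ((n - u - i) / (n - i))` for the logarithm of the ratio of falling
factorials. The elementary bounds `1 - 1/y ≤ log y ≤ y - 1` show that each summand is
`-u/n + O(1/n²)`, so that `G n = n * L n + u * m` satisfies `G n → 0` and even `log n * G n → 0`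
(`tendsto_log_mul_gap`). Writing the floor as `(n/m) (log n + c) - θ n` with `0 ≤ θ n ≤ 1` gives
`u * log n + k n * L n = (log n * G n + c * G n) / m - u * c - θ n * L n → -u * c`.
Together with `(n)_u / n ^ u → 1` this is the claim after exponentiating.
-/

lemma tendsto_log_div_sub (a : ℝ) :
    Tendsto (fun n : ℕ => Real.log n / ((n : ℝ) - a)) atTop (nhds 0) := by
  have h := (Real.tendsto_pow_log_div_mul_add_atTop 1 (-a) 1 one_ne_zero).comp
    (tendsto_natCast_atTop_atTop (R := ℝ))
  refine h.congr fun n => ?_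
  simp [sub_eq_add_neg]

/-- The first-order expansion `log (1 - u / (n - i)) = -u / n + o(1 / (n log n))`. -/
lemma tendsto_log_mul_gap (u i : ℕ) :
    Tendsto (fun n : ℕ => Real.log n *
      ((n : ℝ) * Real.log (((n : ℝ) - u - i) / ((n : ℝ) - i)) + u)) atTop (nhds 0) := by
  have h1 : Tendsto (fun n : ℕ => (-(u * (u + i)) : ℝ) * (Real.log n / ((n : ℝ) - (u + i))))
      atTop (nhds 0) := by
    simpa using (tendsto_log_div_sub ((u : ℝ) + i)).const_mul (-(u * (u + i)) : ℝ)
  have h2 : Tendsto (fun n : ℕ => (-(u * i) : ℝ) * (Real.log n / ((n : ℝ) - i)))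
      atTop (nhds 0) := by
    simpa using (tendsto_log_div_sub (i : ℝ)).const_mul (-(u * i) : ℝ)
  refine tendsto_of_tendsto_of_tendsto_of_le_of_le' h1 h2 ?_ ?_
  all_goals
    filter_upwards [eventually_ge_atTop (u + i + 1)] with n hn
    have hn' : (u : ℝ) + i + 1 ≤ n := by exact_mod_cast hn
    have hu : (0 : ℝ) ≤ u := Nat.cast_nonneg u
    have hi : (0 : ℝ) ≤ i := Nat.cast_nonneg i
    have p1 : (0 : ℝ) < (n : ℝ) - u - i := by linarith
    have p2 : (0 : ℝ) < (n : ℝ) - i := by linarith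
    have p3 : (0 : ℝ) < (n : ℝ) - (u + i) := by linarith
    have hl : 0 ≤ Real.log n := Real.log_natCast_nonneg n
    have hpos := div_pos p1 p2
  · have hb := Real.one_sub_inv_le_log_of_pos hpos
    calc _ = Real.log n * ((n : ℝ) * (1 - (((n : ℝ) - u - i) / ((n : ℝ) - i))⁻¹) + u) := by
          have p4 : (n : ℝ) - (u + i) = n - u - i := by ring
          rw [p4]
          field_simp
          ring
      _ ≤ _ := by gcongr
  · have hb := Real.log_le_sub_one_of_pos hpos
    calc _ ≤ Real.log n * ((n : ℝ) * (((n : ℝ) - u - i) / ((n : ℝ) - i) - 1) + u) := by gcongr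
      _ = _ := by
          field_simp
          ring

lemma tendsto_sub_div_self (a : ℝ) :
    Tendsto (fun n : ℕ => ((n : ℝ) - a) / n) atTop (nhds 1) := by
  have h : Tendsto (fun n : ℕ => 1 - a / (n : ℝ)) atTop (nhds (1 - 0)) :=
    tendsto_const_nhds.sub (tendsto_const_div_atTop_nhds_zero_nat a)
  rw [sub_zero] at h
  refine h.congr' ?_
  filter_upwards [eventually_gt_atTop 0] with n hn
  have : (n : ℝ) ≠ 0 := by positivity
  field_simp

lemma cast_descFactorial_eq_prod (n k : ℕ) (h : k ≤ n) :
    (n.descFactorial k : ℝ) = ∏ i ∈ range k, ((n : ℝ) - i) := by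
  rw [Nat.descFactorial_eq_prod_range, Nat.cast_prod]
  refine prod_congr rfl fun i hi => ?_
  have := mem_range.1 hi
  rw [Nat.cast_sub (by omega)]

lemma tendsto_descFactorial_div_pow (u : ℕ) :
    Tendsto (fun n : ℕ => (n.descFactorial u : ℝ) / (n : ℝ) ^ u) atTop (nhds 1) := by
  have h : Tendsto (fun n : ℕ => ∏ i ∈ range u, ((n : ℝ) - i) / n) atTop
      (nhds (∏ _i ∈ range u, 1)) :=
    tendsto_finsetProd _ fun i _ => tendsto_sub_div_self i
  rw [prod_const_one] at h
  refine h.congr' ?_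
  filter_upwards [eventually_ge_atTop u] with n hn
  rw [cast_descFactorial_eq_prod n u hn, prod_div_distrib]
  simp

theorem stmt17 (m : ℕ) (hm : 1 ≤ m) (u : ℕ) (c : ℝ) :
    Tendsto (fun n : ℕ =>
        (Nat.descFactorial n u : ℝ) *
          ((Nat.descFactorial (n - u) m : ℝ) / (Nat.descFactorial n m : ℝ))
            ^ (⌊((n : ℝ) / (m : ℝ)) * (Real.log n + c)⌋₊))
      atTop (nhds (Real.exp (-c) ^ u)) := by
  have hm0 : (m : ℝ) ≠ 0 := by positivity
  have hlog : Tendsto (fun n : ℕ => Real.log (n : ℝ)) atTop atTop :=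
    Real.tendsto_log_atTop.comp tendsto_natCast_atTop_atTop
  set L : ℕ → ℝ := fun n => ∑ i ∈ range m, Real.log (((n : ℝ) - u - i) / ((n : ℝ) - i)) with hL
  set G : ℕ → ℝ := fun n => n * L n + u * m with hG
  have hlG : Tendsto (fun n : ℕ => Real.log n * G n) atTop (nhds 0) := by
    have h := tendsto_finsetSum (range m) fun i _ => tendsto_log_mul_gap u i
    rw [sum_const_zero] at h
    refine h.congr fun n => ?_
    rw [← mul_sum, sum_add_distrib, ← mul_sum]
    simp [hG, hL, mul_comm]
  have hG0 : Tendsto G atTop (nhds 0) := by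
    refine (hlG.div_atTop hlog).congr' ?_
    filter_upwards [hlog.eventually_gt_atTop 0] with n hn
    field_simp
  have hL0 : Tendsto L atTop (nhds 0) := by
    refine ((hG0.sub_const ((u : ℝ) * m)).div_atTop
      (tendsto_natCast_atTop_atTop (R := ℝ))).congr' ?_
    filter_upwards [eventually_gt_atTop 0] with n hn
    have : (n : ℝ) ≠ 0 := by positivity
    simp only [hG]
    field_simp
    ring
  set x : ℕ → ℝ := fun n => ((n : ℝ) / (m : ℝ)) * (Real.log n + c) with hx
  set θ : ℕ → ℝ := fun n => x n - ⌊x n⌋₊ with hθ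
  -- The natural-number floor truncates at zero, so `0 ≤ θ n` needs `log n + c ≥ 0`.
  have hθL : Tendsto (fun n => θ n * L n) atTop (nhds 0) := by
    refine squeeze_zero_norm' ?_ (tendsto_norm_zero.comp hL0)
    filter_upwards [hlog.eventually_ge_atTop (-c)] with n hn
    have hx0 : 0 ≤ x n := mul_nonneg (by positivity) (by linarith)
    have h1 := Nat.floor_le hx0
    have h2 := Nat.lt_floor_add_one (x n)
    have h3 : ‖θ n‖ ≤ 1 := by
      rw [Real.norm_eq_abs, abs_le]
      constructor <;> simp only [hθ] <;> linarith
    rw [norm_mul]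
    exact mul_le_of_le_one_left (norm_nonneg _) h3
  have hexp : Tendsto (fun n : ℕ => u * Real.log n + ⌊x n⌋₊ * L n) atTop (nhds (u * -c)) := by
    have h := (((hlG.add (hG0.const_mul c)).div_const (m : ℝ)).sub_const (u * c)).sub hθL
    have e : ((0 + c * 0) / (m : ℝ) - u * c - 0) = u * -c := by ring
    rw [e] at h
    refine h.congr fun n => ?_
    simp only [hθ, hx, hG]
    field_simp
    ring
  have hfin := (tendsto_descFactorial_div_pow u).mul
    ((Real.continuous_exp.tendsto _).comp hexp)
  rw [one_mul, Real.exp_nat_mul] at hfin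
  refine hfin.congr' ?_
  filter_upwards [eventually_ge_atTop (u + m + 1)] with n hn
  have hn0 : (0 : ℝ) < n := by exact_mod_cast (by omega : 0 < n)
  have hn' : (u : ℝ) + m + 1 ≤ n := by exact_mod_cast hn
  have hq : (Nat.descFactorial (n - u) m : ℝ) / (Nat.descFactorial n m : ℝ)
      = Real.exp (L n) := by
    rw [cast_descFactorial_eq_prod _ _ (by omega), cast_descFactorial_eq_prod _ _ (by omega),
      ← prod_div_distrib, hL, Real.exp_sum]
    refine prod_congr rfl fun i hi => ?_
    have hi' : (i : ℝ) < m := by exact_mod_cast mem_range.1 hi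
    have hu : (0 : ℝ) ≤ u := Nat.cast_nonneg u
    rw [Real.exp_log (div_pos (by linarith) (by linarith)), Nat.cast_sub (by omega)]
  rw [hq]
  simp only [Function.comp]
  rw [Real.exp_add, Real.exp_nat_mul, Real.exp_nat_mul, Real.exp_log hn0, ← mul_assoc,
    div_mul_cancel₀ _ (by positivity)]
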